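/- Assume rank M = 2 and let t = (t₁,t₂,t₃)ᵀ be a nonzero vector spanning the null space of Mᵀ; set z = t₁x₁+t₂x₂+t₃x₃ ∈ A¹. Then the degree-1 cocycles are Z¹ = k·z (a one-dimensional space), and the degree-2 cocycles are Z² = k·x₁² ⊕ k·x₂² ⊕ k·x₃², i.e. Z² is the three-dimensional span of x₁², x₂², x₃². -/

import Mathlib

/-!
The relations make every `xⱼ²` central and `∂xᵢ` a combination of squares, so `∂(xᵢ²) = 0` and
`∂(xᵢxⱼ) = ∂xᵢ·xⱼ - xᵢ·∂xⱼ`. Linear independence of the monomials involved is detected by the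
two-dimensional representations `rep a`, in which the generators act by multiples `aᵢ` of three
linearly independent anticommuting matrices.

A degree-1 element `∑ cᵢxᵢ` is a cocycle iff `c ∈ ker Mᵀ`, and this kernel is the line spanned by
`t` because `rank M = 2`. For `p x₁x₂ + q x₁x₃ + r x₂x₃` to be a cocycle, the three vectors
`(0, p, q)`, `(p, 0, -r)`, `(q, r, 0)` must all lie in `ker Mᵀ` (`row_relations`). Being
proportional to the single vector `t ≠ 0`, they all vanish (`coeff_eq_zero`), so only
combinations of squares remain.
-/

noncomputable section

/-- The skew-commutation relations `xᵢxⱼ + xⱼxᵢ = 0` (`i ≠ j`) among the three generators. -/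
inductive SkewRel (k : Type) [Field k] :
    FreeAlgebra k (Fin 3) → FreeAlgebra k (Fin 3) → Prop
  | r01 : SkewRel k
      (FreeAlgebra.ι k 0 * FreeAlgebra.ι k 1 + FreeAlgebra.ι k 1 * FreeAlgebra.ι k 0) 0
  | r12 : SkewRel k
      (FreeAlgebra.ι k 1 * FreeAlgebra.ι k 2 + FreeAlgebra.ι k 2 * FreeAlgebra.ι k 1) 0
  | r20 : SkewRel k
      (FreeAlgebra.ι k 2 * FreeAlgebra.ι k 0 + FreeAlgebra.ι k 0 * FreeAlgebra.ι k 2) 0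

/-- The graded skew polynomial algebra `A = k⟨x₁,x₂,x₃⟩/(x₁x₂+x₂x₁, x₂x₃+x₃x₂, x₃x₁+x₁x₃)`. -/
abbrev SkewAlg (k : Type) [Field k] := RingQuot (SkewRel k)

/-- The generators `x₁, x₂, x₃` of `A` (indexed by `0, 1, 2`). -/
def X (k : Type) [Field k] (i : Fin 3) : SkewAlg k :=
  RingQuot.mkAlgHom k (SkewRel k) (FreeAlgebra.ι k i)

/-- The degree-`n` homogeneous component `Aⁿ` of `A`: the `n`-th power of the span of the
generators (the algebra `A` is generated in degree `1` by `x₁,x₂,x₃`, and the defining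
relations are homogeneous). -/
def deg (k : Type) [Field k] (n : ℕ) : Submodule k (SkewAlg k) :=
  (Submodule.span k {X k 0, X k 1, X k 2}) ^ n

/-- A differential on `A` determined by a matrix `M ∈ M₃(k)`: a `k`-linear map of degree `1`
squaring to zero, satisfying the graded Leibniz rule, with
`∂(xᵢ) = mᵢ₁x₁² + mᵢ₂x₂² + mᵢ₃x₃²`. -/
structure DGDiff (k : Type) [Field k] (M : Matrix (Fin 3) (Fin 3) k) where
  d : SkewAlg k →ₗ[k] SkewAlg k
  grade : ∀ n : ℕ, ∀ a ∈ deg k n, d a ∈ deg k (n + 1)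
  dd : ∀ a : SkewAlg k, d (d a) = 0
  leibniz : ∀ n : ℕ, ∀ a ∈ deg k n, ∀ b : SkewAlg k,
    d (a * b) = d a * b + ((-1 : k) ^ n) • (a * d b)
  dX : ∀ i : Fin 3,
    d (X k i) = M i 0 • (X k 0) ^ 2 + M i 1 • (X k 1) ^ 2 + M i 2 • (X k 2) ^ 2

/-- `Zⁿ`, the space of cocycles of degree `n`. -/
def cocycle (k : Type) [Field k] {M : Matrix (Fin 3) (Fin 3) k} (D : DGDiff k M) (n : ℕ) :
    Submodule k (SkewAlg k) :=
  LinearMap.ker D.d ⊓ deg k n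

/-- `Bⁿ`, the space of coboundaries of degree `n` (`B⁰ = 0`, `Bⁿ⁺¹ = ∂(Aⁿ)`). -/
def cobound (k : Type) [Field k] {M : Matrix (Fin 3) (Fin 3) k} (D : DGDiff k M) :
    ℕ → Submodule k (SkewAlg k)
  | 0 => ⊥
  | n + 1 => (deg k n).map D.d

/-! ### Monomials in the skew polynomial algebra -/

section Algebra

variable {k : Type} [Field k]

lemma X_mul_10 : X k 1 * X k 0 = -(X k 0 * X k 1) := by
  have h := RingQuot.mkAlgHom_rel k (SkewRel.r01 (k := k))
  simp only [map_add, map_mul, map_zero] at h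
  exact eq_neg_of_add_eq_zero_right h

lemma X_mul_21 : X k 2 * X k 1 = -(X k 1 * X k 2) := by
  have h := RingQuot.mkAlgHom_rel k (SkewRel.r12 (k := k))
  simp only [map_add, map_mul, map_zero] at h
  exact eq_neg_of_add_eq_zero_right h

lemma X_mul_20 : X k 2 * X k 0 = -(X k 0 * X k 2) := by
  have h := RingQuot.mkAlgHom_rel k (SkewRel.r20 (k := k))
  simp only [map_add, map_mul, map_zero] at h
  exact eq_neg_of_add_eq_zero_left h

lemma X_anticomm {i j : Fin 3} (h : i ≠ j) : X k i * X k j = -(X k j * X k i) := by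
  fin_cases i <;> fin_cases j <;>
    first
    | exact absurd rfl h
    | simp [X_mul_10, X_mul_20, X_mul_21]

lemma commute_sq (j i : Fin 3) : Commute (X k j ^ 2) (X k i) := by
  rcases eq_or_ne j i with rfl | h
  · exact (Commute.refl _).pow_left 2
  · change X k j ^ 2 * X k i = X k i * X k j ^ 2
    -- The sign is carried by a scalar, which moves through products by the algebra axioms alone.
    have h' : X k j * X k i = (-1 : k) • (X k i * X k j) := by rw [X_anticomm h]; module
    rw [pow_two, mul_assoc, h', mul_smul_comm, ← mul_assoc, h', smul_mul_assoc, smul_smul,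
      neg_mul_neg, one_mul, one_smul, mul_assoc]

lemma X_mem_deg (i : Fin 3) : X k i ∈ deg k 1 := by
  rw [deg, pow_one]
  apply Submodule.subset_span
  fin_cases i <;> simp

lemma mem_deg_one {y : SkewAlg k} (hy : y ∈ deg k 1) :
    ∃ c : Fin 3 → k, y = c 0 • X k 0 + c 1 • X k 1 + c 2 • X k 2 := by
  rw [deg, pow_one, Submodule.mem_span_triple] at hy
  obtain ⟨a, b, c, rfl⟩ := hy
  exact ⟨![a, b, c], by simp⟩

lemma span_sq_le : Submodule.span k {X k 0 ^ 2, X k 1 ^ 2, X k 2 ^ 2} ≤ deg k 2 := by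
  have h : ∀ i, X k i ^ 2 ∈ deg k 2 := fun i ↦ by
    have := Submodule.pow_mem_pow _ (X_mem_deg (k := k) i) 2
    simpa [deg] using this
  rw [Submodule.span_le]
  rintro _ (rfl | rfl | rfl) <;> exact h _

lemma deg_two_le : deg k 2 ≤
    Submodule.span k {X k 0 ^ 2, X k 1 ^ 2, X k 2 ^ 2} ⊔
      Submodule.span k {X k 0 * X k 1, X k 0 * X k 2, X k 1 * X k 2} := by
  rw [deg, pow_two, Submodule.mul_le]
  intro m hm n hn
  obtain ⟨a, b, c, rfl⟩ := Submodule.mem_span_triple.1 hm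
  obtain ⟨a', b', c', rfl⟩ := Submodule.mem_span_triple.1 hn
  refine Submodule.mem_sup.2 ⟨_, Submodule.mem_span_triple.2 ⟨a * a', b * b', c * c', rfl⟩, _,
    Submodule.mem_span_triple.2 ⟨a * b' - b * a', a * c' - c * a', b * c' - c * b', rfl⟩, ?_⟩
  simp only [add_mul, mul_add, smul_mul_smul_comm, X_mul_10, X_mul_20, X_mul_21, pow_two]
  module

/-! ### Linear independence through two-dimensional representations -/

/-- The matrices `a₁σ₁, a₂σ₂, a₃σ₃`, where `σ₁, σ₂` are the anticommuting symmetric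
involutions of the plane and `σ₃ = σ₁σ₂`, so that `σ₃² = -1`. -/
def repGen (a : Fin 3 → k) : Fin 3 → Matrix (Fin 2) (Fin 2) k :=
  ![!![0, a 0; a 0, 0], !![a 1, 0; 0, -a 1], !![0, -a 2; a 2, 0]]

/-- The two-dimensional representation of `A` sending `xᵢ` to `repGen a i`. -/
def rep (a : Fin 3 → k) : SkewAlg k →ₐ[k] Matrix (Fin 2) (Fin 2) k :=
  RingQuot.liftAlgHom k ⟨FreeAlgebra.lift k (repGen a), by
    rintro _ _ (_ | _ | _) <;> ext i j <;> fin_cases i <;> fin_cases j <;>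
      simp [repGen] <;> ring⟩

lemma rep_X (a : Fin 3 → k) (i : Fin 3) : rep a (X k i) = repGen a i := by
  simp [rep, X]

/-- The scalar by which `u₁x₁² + u₂x₂² + u₃x₃²` acts in `rep a`. -/
def sqEval (a u : Fin 3 → k) : k := u 0 * a 0 ^ 2 + u 1 * a 1 ^ 2 - u 2 * a 2 ^ 2

lemma rep_sq (a u : Fin 3 → k) :
    rep a (u 0 • X k 0 ^ 2 + u 1 • X k 1 ^ 2 + u 2 • X k 2 ^ 2) =
      sqEval a u • (1 : Matrix (Fin 2) (Fin 2) k) := by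
  simp only [map_add, map_smul, map_pow, rep_X]
  ext i j
  fin_cases i <;> fin_cases j <;>
    simp [repGen, sqEval, pow_two] <;> ring

lemma sq_coeff_eq_zero {u : Fin 3 → k}
    (h : u 0 • X k 0 ^ 2 + u 1 • X k 1 ^ 2 + u 2 • X k 2 ^ 2 = 0) : u = 0 := by
  have key : ∀ a, sqEval a u = 0 := fun a ↦ by
    have := congrArg (fun y ↦ rep a y 0 0) h
    simpa [rep_sq] using this
  ext i
  have := key (Pi.single i 1)
  fin_cases i <;> simpa [sqEval] using this

lemma sq_linearIndependent : LinearIndependent k (fun i ↦ X k i ^ 2) := by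
  rw [Fintype.linearIndependent_iff]
  intro g hg i
  rw [Fin.sum_univ_three] at hg
  exact congrFun (sq_coeff_eq_zero hg) i

/-- The matrices `σᵢ` are linearly independent away from characteristic two. -/
lemma repGen_coeff_eq_zero [CharZero k] {a c : Fin 3 → k}
    (h : c 0 • repGen a 0 + c 1 • repGen a 1 + c 2 • repGen a 2 = 0) (i : Fin 3) :
    c i * a i = 0 := by
  have h00 := congrFun (congrFun h 0) 0
  have h01 := congrFun (congrFun h 0) 1
  have h10 := congrFun (congrFun h 1) 0
  simp [repGen] at h00 h01 h10
  have two : (2 : k) ≠ 0 := two_ne_zero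
  have h0 : c 0 * a 0 = 0 := mul_left_cancel₀ two (by linear_combination h01 + h10)
  have h2 : c 2 * a 2 = 0 := mul_left_cancel₀ two (by linear_combination h10 - h01)
  fin_cases i
  · exact h0
  · simpa using h00
  · exact h2

lemma lin_coeff_eq_zero [CharZero k] {c : Fin 3 → k}
    (h : c 0 • X k 0 + c 1 • X k 1 + c 2 • X k 2 = 0) : c = 0 := by
  have := congrArg (rep (fun _ ↦ (1 : k))) h
  simp only [map_add, map_smul, rep_X, map_zero] at this
  ext i
  simpa using repGen_coeff_eq_zero this i

/-- A quadratic form `u₁a₁² + u₂a₂² - u₃a₃²` vanishing wherever `aⱼ ≠ 0` is zero. -/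
lemma eq_zero_of_sqEval {u : Fin 3 → k} (j : Fin 3)
    (h : ∀ a : Fin 3 → k, sqEval a u * a j = 0) : u = 0 := by
  -- The indicator vectors of `{j}` and `{j, l}` already separate the coefficients.
  have hj : u j = 0 := by
    have := h (Pi.single j 1)
    fin_cases j <;> simpa [sqEval] using this
  ext l
  rcases eq_or_ne l j with rfl | hl
  · exact hj
  · have := h (Pi.single j 1 + Pi.single l 1)
    fin_cases j <;> fin_cases l <;> simp [sqEval] at hl hj this ⊢ <;> simpa [hj] using this

end Algebra

/-! ### The differential in degrees one and two -/

section Differential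

variable {k : Type} [Field k] {M : Matrix (Fin 3) (Fin 3) k} (D : DGDiff k M)

lemma d_mul (i j : Fin 3) : D.d (X k i * X k j) = D.d (X k i) * X k j - X k i * D.d (X k j) := by
  rw [D.leibniz 1 _ (X_mem_deg i), pow_one]
  module

lemma d_sq (i : Fin 3) : D.d (X k i ^ 2) = 0 := by
  have h : Commute (D.d (X k i)) (X k i) := by
    rw [D.dX]
    exact (((commute_sq 0 i).smul_left _).add_left ((commute_sq 1 i).smul_left _)).add_left
      ((commute_sq 2 i).smul_left _)
  rw [pow_two, d_mul, h.eq, sub_self]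

lemma rep_d (a : Fin 3 → k) (i : Fin 3) :
    rep a (D.d (X k i)) = sqEval a (M i) • (1 : Matrix (Fin 2) (Fin 2) k) := by
  rw [D.dX, rep_sq]

lemma d_lin (c : Fin 3 → k) :
    D.d (c 0 • X k 0 + c 1 • X k 1 + c 2 • X k 2) =
      M.transpose.mulVec c 0 • X k 0 ^ 2 + M.transpose.mulVec c 1 • X k 1 ^ 2 +
        M.transpose.mulVec c 2 • X k 2 ^ 2 := by
  simp only [map_add, map_smul, D.dX, Matrix.mulVec, dotProduct, Fin.sum_univ_three,
    Matrix.transpose_apply]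
  module

lemma d_lin_eq_zero_iff (c : Fin 3 → k) :
    D.d (c 0 • X k 0 + c 1 • X k 1 + c 2 • X k 2) = 0 ↔ M.transpose.mulVec c = 0 := by
  rw [d_lin]
  exact ⟨sq_coeff_eq_zero, fun h ↦ by simp [h]⟩

/-- Comparing the coefficients of the monomials `xⱼxₗ²` in the differential of
`p x₁x₂ + q x₁x₃ + r x₂x₃` gives three linear relations among the rows of `M`. -/
lemma row_relations [CharZero k] {p q r : k}
    (h : D.d (p • (X k 0 * X k 1) + q • (X k 0 * X k 2) + r • (X k 1 * X k 2)) = 0) :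
    M.transpose.mulVec ![0, p, q] = 0 ∧ M.transpose.mulVec ![p, 0, -r] = 0 ∧
      M.transpose.mulVec ![q, r, 0] = 0 := by
  have key (a : Fin 3 → k) := repGen_coeff_eq_zero (a := a)
    (c := ![-(p * sqEval a (M 1) + q * sqEval a (M 2)), p * sqEval a (M 0) - r * sqEval a (M 2),
      q * sqEval a (M 0) + r * sqEval a (M 1)]) (by
    have := congrArg (rep a) h
    simp only [map_add, map_smul, d_mul, map_sub, map_mul, rep_X, rep_d, smul_mul_assoc, one_mul,
      mul_smul_comm, mul_one, map_zero] at this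
    rw [← this]
    simp only [Matrix.cons_val]
    module)
  refine ⟨eq_zero_of_sqEval 0 fun a ↦ ?_, eq_zero_of_sqEval 1 fun a ↦ ?_,
    eq_zero_of_sqEval 2 fun a ↦ ?_⟩
  · have := key a 0
    simp [sqEval, Matrix.mulVec, dotProduct, Fin.sum_univ_three, -mul_eq_zero] at this ⊢
    linear_combination -this
  · have := key a 1
    simp [sqEval, Matrix.mulVec, dotProduct, Fin.sum_univ_three, -mul_eq_zero] at this ⊢
    linear_combination this
  · have := key a 2
    simp [sqEval, Matrix.mulVec, dotProduct, Fin.sum_univ_three, -mul_eq_zero] at this ⊢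
    linear_combination this

end Differential

/-! ### The null space of the transposed matrix -/

section Kernel

variable {k : Type} [Field k]

lemma exists_smul_of_mem_ker {M : Matrix (Fin 3) (Fin 3) k} (hrank : M.rank = 2)
    {t : Fin 3 → k} (ht0 : t ≠ 0) (ht : M.transpose.mulVec t = 0)
    {c : Fin 3 → k} (hc : M.transpose.mulVec c = 0) : ∃ s : k, s • t = c := by
  have hdim : Module.finrank k (LinearMap.ker M.transpose.mulVecLin) = 1 := by
    have h := M.transpose.mulVecLin.finrank_range_add_finrank_ker
    have hr : Module.finrank k (LinearMap.range M.transpose.mulVecLin) = 2 := by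
      rw [← hrank, ← Matrix.rank_transpose M]; rfl
    rw [hr] at h
    simp at h
    omega
  have hv : (⟨t, ht⟩ : LinearMap.ker M.transpose.mulVecLin) ≠ 0 :=
    fun h ↦ ht0 (congrArg Subtype.val h)
  obtain ⟨s, hs⟩ := (finrank_eq_one_iff_of_nonzero' _ hv).1 hdim ⟨c, hc⟩
  exact ⟨s, congrArg Subtype.val hs⟩

/-- If the rows of the matrix with rows `(0, p, q)`, `(p, 0, -r)`, `(q, r, 0)` are all multiples
of one nonzero vector `t`, then that matrix vanishes. Pick `tᵢ ≠ 0`: row `i` has a zero in place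
`i`, so it vanishes. Column `i` agrees with row `i` up to signs, so it vanishes as well, and hence
so do the two other multiples of `t`. -/
lemma coeff_eq_zero {t : Fin 3 → k} (ht0 : t ≠ 0) {p q r : k}
    (h0 : ∃ s : k, s • t = ![0, p, q]) (h1 : ∃ s : k, s • t = ![p, 0, -r])
    (h2 : ∃ s : k, s • t = ![q, r, 0]) : p = 0 ∧ q = 0 ∧ r = 0 := by
  obtain ⟨a, ha⟩ := h0
  obtain ⟨b, hb⟩ := h1
  obtain ⟨c, hc⟩ := h2
  have e (i) := congrFun ha i
  have f (i) := congrFun hb i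
  have g (i) := congrFun hc i
  have e0 := e 0; have e1 := e 1; have e2 := e 2
  have f0 := f 0; have f1 := f 1; have f2 := f 2
  have g0 := g 0; have g1 := g 1; have g2 := g 2
  simp at e0 e1 e2 f0 f1 f2 g0 g1 g2
  obtain ⟨i, hi⟩ := Function.ne_iff.1 ht0
  fin_cases i <;> simp at hi <;> grind

end Kernel

/-- Assume `rank M = 2` and let `t` be a nonzero vector spanning the null
space of `Mᵀ`; set `z = t₁x₁ + t₂x₂ + t₃x₃`.  Then `Z¹ = k·z` is one-dimensional and
`Z² = k·x₁² ⊕ k·x₂² ⊕ k·x₃²` is the three-dimensional span of `x₁², x₂², x₃²`. -/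
theorem stmt10 (k : Type) [Field k] [IsAlgClosed k] [CharZero k]
    (M : Matrix (Fin 3) (Fin 3) k) (D : DGDiff k M) (hrank : M.rank = 2)
    (t : Fin 3 → k) (ht0 : t ≠ 0) (ht : M.transpose.mulVec t = 0)
    (z : SkewAlg k) (hz : z = t 0 • X k 0 + t 1 • X k 1 + t 2 • X k 2) :
    cocycle k D 1 = Submodule.span k {z} ∧
      Module.finrank k (cocycle k D 1) = 1 ∧
      cocycle k D 2 = Submodule.span k {(X k 0) ^ 2, (X k 1) ^ 2, (X k 2) ^ 2} ∧
      Module.finrank k (cocycle k D 2) = 3 := by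
  subst hz
  have hz0 : t 0 • X k 0 + t 1 • X k 1 + t 2 • X k 2 ≠ 0 := fun h ↦ ht0 (lin_coeff_eq_zero h)
  have hZ1 : cocycle k D 1 =
      Submodule.span k {t 0 • X k 0 + t 1 • X k 1 + t 2 • X k 2} := by
    apply le_antisymm
    · rintro y ⟨hy, hy1⟩
      obtain ⟨c, rfl⟩ := mem_deg_one hy1
      obtain ⟨s, rfl⟩ := exists_smul_of_mem_ker hrank ht0 ht ((d_lin_eq_zero_iff D c).1 hy)
      refine Submodule.mem_span_singleton.2 ⟨s, ?_⟩
      simp only [smul_add, smul_smul, Pi.smul_apply, smul_eq_mul]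
    · rw [Submodule.span_singleton_le_iff_mem]
      refine ⟨(d_lin_eq_zero_iff D t).2 ht, ?_⟩
      exact add_mem (add_mem ((deg k 1).smul_mem _ (X_mem_deg 0))
        ((deg k 1).smul_mem _ (X_mem_deg 1))) ((deg k 1).smul_mem _ (X_mem_deg 2))
  have hker : Submodule.span k {X k 0 ^ 2, X k 1 ^ 2, X k 2 ^ 2} ≤ LinearMap.ker D.d := by
    rw [Submodule.span_le]
    rintro _ (rfl | rfl | rfl) <;> exact d_sq D _
  have hZ2 : cocycle k D 2 = Submodule.span k {X k 0 ^ 2, X k 1 ^ 2, X k 2 ^ 2} := by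
    apply le_antisymm
    · rintro y ⟨hy, hy2⟩
      obtain ⟨u, hu, v, hv, rfl⟩ := Submodule.mem_sup.1 (deg_two_le hy2)
      obtain ⟨p, q, r, rfl⟩ := Submodule.mem_span_triple.1 hv
      rw [SetLike.mem_coe, LinearMap.mem_ker, map_add, LinearMap.mem_ker.1 (hker hu),
        zero_add] at hy
      obtain ⟨h0, h1, h2⟩ := row_relations D hy
      obtain ⟨rfl, rfl, rfl⟩ := coeff_eq_zero ht0 (exists_smul_of_mem_ker hrank ht0 ht h0)
        (exists_smul_of_mem_ker hrank ht0 ht h1) (exists_smul_of_mem_ker hrank ht0 ht h2)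
      simpa using hu
    · exact le_inf hker span_sq_le
  refine ⟨hZ1, ?_, hZ2, ?_⟩
  · rw [hZ1, finrank_span_singleton hz0]
  · have hrange : ({X k 0 ^ 2, X k 1 ^ 2, X k 2 ^ 2} : Set (SkewAlg k)) =
        Set.range (fun i ↦ X k i ^ 2) := by
      ext y
      simp [Fin.exists_fin_succ, eq_comm]
    rw [hZ2, hrange, finrank_span_eq_card sq_linearIndependent, Fintype.card_fin]
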